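/- arXiv:2411.14561 — 2 statements merged into one kernel-verified Lean document; each statement's English description precedes it below -/
import Mathlib

section
/- Let p ≥ 2 be an integer. There exists a nonzero real polynomial u of degree at most p such that ∫_{−1}^{1} (I_{p−1}u)(x)² dx = (2 + 4/(2p−3)) ∫_{−1}^{1} u(x)² dx; that is, the L² stability constant 2 + 4/(2p−3) of Gauss–Lobatto interpolation on degree-p polynomials is sharp. -/
open Polynomial

/-- The `n`-th Legendre polynomial, given by the Rodrigues formula
`P_n(x) = 1/(2^n n!) dⁿ/dxⁿ (x² − 1)ⁿ`, normalized so that `P_n(1) = 1`. -/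
noncomputable def legendre (n : ℕ) : Polynomial ℝ :=
  Polynomial.C (1 / (2 ^ n * (n.factorial : ℝ))) *
    (⇑(Polynomial.derivative (R := ℝ)))^[n] ((Polynomial.X ^ 2 - 1) ^ n)

/-- The polynomial `χ_p(x) = P_{p−1}'(x) (x² − 1)`, whose roots are the `p`
Gauss–Lobatto nodes. -/
noncomputable def lobattoChi (p : ℕ) : Polynomial ℝ :=
  Polynomial.derivative (legendre (p - 1)) * (Polynomial.X ^ 2 - 1)


/-- evaluate low derivatives at roots of `X^2-1` -/
lemma lob_vanish (n k : ℕ) (h : k < n) (x : ℝ) (hx : x ^ 2 = 1) :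
    (derivative^[k] ((X ^ 2 - 1 : ℝ[X]) ^ n)).eval x = 0 := by
  have h1 : (X ^ 2 - 1 : ℝ[X]) ^ (n - k) ∣ derivative^[k] ((X ^ 2 - 1 : ℝ[X]) ^ n) :=
    pow_sub_dvd_iterate_derivative_pow _ _ _
  obtain ⟨r, hr⟩ := h1
  have : n - k ≠ 0 := by omega
  rw [hr]
  simp [hx, this]

lemma lob_ibp (f g : ℝ[X]) :
    ∫ x in (-1:ℝ)..1, (derivative f).eval x * g.eval x =
      f.eval 1 * g.eval 1 - f.eval (-1) * g.eval (-1) -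
        ∫ x in (-1:ℝ)..1, f.eval x * (derivative g).eval x := by
  have h := intervalIntegral.integral_deriv_mul_eq_sub (a := (-1:ℝ)) (b := 1)
    (u := fun x => f.eval x) (v := fun x => g.eval x)
    (u' := fun x => (derivative f).eval x) (v' := fun x => (derivative g).eval x)
    (fun x _ => f.hasDerivAt x) (fun x _ => g.hasDerivAt x)
    ((derivative f).continuous.intervalIntegrable _ _)
    ((derivative g).continuous.intervalIntegrable _ _)
  rw [intervalIntegral.integral_add
    (Continuous.intervalIntegrable (by fun_prop) _ _)
    (Continuous.intervalIntegrable (by fun_prop) _ _)] at h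
  linarith

lemma lob_ortho (n : ℕ) : ∀ k ≤ n, ∀ q : ℝ[X], q.degree < k →
    ∫ x in (-1:ℝ)..1, (derivative^[k] ((X ^ 2 - 1 : ℝ[X]) ^ n)).eval x * q.eval x = 0 := by
  intro k
  induction k with
  | zero =>
    intro _ q hq
    have : q = 0 := by
      rw [← degree_eq_bot]
      simpa using hq
    simp [this]
  | succ k ih =>
    intro hk q hq
    rw [Function.iterate_succ_apply', lob_ibp, lob_vanish n k (by omega) 1 (by norm_num),
      lob_vanish n k (by omega) (-1) (by norm_num), ih (by omega)]
    · simp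
    · by_cases h0 : q = 0
      · simp [h0]
      · by_cases hd : q.natDegree = 0
        · rw [natDegree_eq_zero] at hd
          obtain ⟨c, rfl⟩ := hd
          simp
        · refine (degree_derivative_lt h0).trans_le ?_
          exact Order.le_of_lt_succ (by exact_mod_cast hq)

lemma lob_leg_ortho (n : ℕ) (q : ℝ[X]) (hq : q.degree < n) :
    ∫ x in (-1:ℝ)..1, (legendre n).eval x * q.eval x = 0 := by
  have h := lob_ortho n n le_rfl q hq
  simp only [legendre, eval_mul, eval_C, mul_assoc]
  rw [intervalIntegral.integral_const_mul, h, mul_zero]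

lemma lob_leg_natDegree (n : ℕ) : (legendre n).natDegree ≤ n := by
  unfold legendre
  refine (natDegree_C_mul_le _ _).trans ((natDegree_iterate_derivative _ _).trans ?_)
  have : ((X ^ 2 - 1 : ℝ[X]) ^ n).natDegree ≤ n * 2 := by
    refine natDegree_pow_le_of_le n ?_
    compute_degree
  omega

lemma lob_leg_degree (n m : ℕ) (h : n < m) : (legendre n).degree < m :=
  degree_le_natDegree.trans_lt (by exact_mod_cast (lob_leg_natDegree n).trans_lt h)

lemma lob_it_X (n : ℕ) (q : ℝ[X]) :
    derivative^[n] (X * q) = X * derivative^[n] q + n • derivative^[n - 1] q := by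
  rw [mul_comm, iterate_derivative_mul_X, mul_comm]

lemma lob_d1 (m : ℕ) : derivative ((X ^ 2 - 1 : ℝ[X]) ^ (m + 1)) =
    C (2 * (m + 1) : ℝ) * (X * (X ^ 2 - 1) ^ m) := by
  rw [derivative_pow_succ]
  simp only [derivative_sub, derivative_X_pow, derivative_one, map_mul, map_add, map_ofNat,
    map_natCast, map_one]
  push_cast
  ring

lemma lob_step (m : ℕ) : legendre (m + 2) = legendre m +
    C ((2 * m + 3) / (2 ^ (m + 1) * ((m + 1).factorial : ℝ))) *
      derivative^[m] ((X ^ 2 - 1 : ℝ[X]) ^ (m + 1)) := by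
  have h : derivative^[2] ((X ^ 2 - 1 : ℝ[X]) ^ (m + 2)) =
      C (2 * (m + 2) * (2 * m + 3) : ℝ) * (X ^ 2 - 1) ^ (m + 1) +
      C (4 * (m + 2) * (m + 1) : ℝ) * (X ^ 2 - 1) ^ m := by
    simp only [Function.iterate_succ, Function.iterate_zero, Function.comp, id]
    rw [show m + 2 = (m + 1) + 1 from rfl, lob_d1, derivative_C_mul, derivative_mul, lob_d1]
    simp only [map_mul, map_add, map_ofNat, map_natCast, map_one, derivative_X]
    push_cast
    ring
  unfold legendre
  rw [Function.iterate_add_apply, h, iterate_map_add, iterate_derivative_C_mul,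
    iterate_derivative_C_mul, mul_add, ← mul_assoc, ← mul_assoc, ← C_mul, ← C_mul, add_comm]
  have : (m.factorial : ℝ) ≠ 0 := by positivity
  congr 2
  · congr 1
    simp only [Nat.factorial_succ]; push_cast
    field_simp
    ring
  · congr 1
    simp only [Nat.factorial_succ]; push_cast
    field_simp
    ring

lemma lob_chi (m : ℕ) :
    derivative^[m + 2] ((X ^ 2 - 1 : ℝ[X]) ^ (m + 1)) * (X ^ 2 - 1) =
      C ((m + 1) * (m + 2) : ℝ) * derivative^[m] ((X ^ 2 - 1 : ℝ[X]) ^ (m + 1)) := by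
  set F := (X ^ 2 - 1 : ℝ[X]) ^ (m + 1) with hF
  have h : X * (X * derivative F) - derivative F = C (2 * (m + 1) : ℝ) * (X * F) := by
    rw [hF, lob_d1]
    ring
  have h2 := congrArg (derivative^[m + 1]) h
  have h3 : m • derivative^[m - 1] (derivative F) = m • derivative^[m] F := by
    cases m with
    | zero => simp
    | succ m => rw [← Function.iterate_succ_apply derivative]; rfl
  have h4 : derivative^[m + 1] (derivative F) = derivative^[m + 2] F := rfl
  have h5 : derivative^[m] (derivative F) = derivative^[m + 1] F := rfl
  rw [iterate_derivative_sub, iterate_derivative_C_mul, lob_it_X (m + 1) (X * derivative F),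
    lob_it_X (m + 1) (derivative F), lob_it_X (m + 1) F, Nat.add_sub_cancel,
    lob_it_X m (derivative F), h3, h4, h5] at h2
  simp only [nsmul_eq_mul, map_mul, map_add, map_ofNat, map_natCast, map_one] at h2 ⊢
  push_cast at h2
  linear_combination h2

lemma lob_leg_zero : legendre 0 = 1 := by simp [legendre]
lemma lob_leg_one : legendre 1 = X := by
  simp [legendre]
  rw [← mul_assoc, one_add_one_eq_two, ← map_ofNat (C : ℝ →+* ℝ[X]), ← C_mul]
  norm_num

lemma lob_leg_end (n : ℕ) : (legendre n).eval 1 = 1 ∧ (legendre n).eval (-1) = (-1) ^ n := by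
  induction n using Nat.twoStepInduction with
  | zero => simp [lob_leg_zero]
  | one => simp [lob_leg_one]
  | more n ih _ =>
    rw [lob_step, eval_add, eval_add, eval_mul, eval_mul,
      lob_vanish (n+1) n (by omega) 1 (by norm_num),
      lob_vanish (n+1) n (by omega) (-1) (by norm_num), ih.1, ih.2]
    simp [pow_add]

lemma lob_deriv (m : ℕ) : derivative (legendre (m + 2)) = derivative (legendre m) +
    C (2 * m + 3 : ℝ) * legendre (m + 1) := by
  rw [lob_step, derivative_add, derivative_C_mul, ← Function.iterate_succ_apply' derivative]
  simp only [legendre]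
  rw [← mul_assoc, ← C_mul]
  congr 3
  ring

lemma lob_deriv_degree (n : ℕ) (h : 0 < n) : (derivative (legendre n)).degree < n := by
  refine degree_le_natDegree.trans_lt ?_
  have h1 := natDegree_derivative_le (legendre n)
  have h2 := lob_leg_natDegree n
  exact_mod_cast (show (derivative (legendre n)).natDegree < n by omega)

lemma lob_norm (n : ℕ) : ∫ x in (-1:ℝ)..1, (legendre n).eval x ^ 2 = 2 / (2 * n + 1) := by
  cases n with
  | zero => simp [lob_leg_zero]; norm_num
  | succ m =>
    have h1 := lob_ibp (legendre (m + 2)) (legendre (m + 1))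
    rw [lob_leg_ortho (m + 2) (derivative (legendre (m + 1)))
      ((lob_deriv_degree (m+1) (by omega)).trans (by exact_mod_cast Nat.lt_succ_self _))] at h1
    have h2 : ∫ x in (-1:ℝ)..1, (legendre (m+1)).eval x * (derivative (legendre m)).eval x = 0 := by
      apply lob_leg_ortho
      refine (degree_derivative_le).trans_lt (lob_leg_degree m (m+1) (by omega))
    rw [lob_deriv] at h1
    have h3 : ∀ x : ℝ, (derivative (legendre m) + C (2 * m + 3 : ℝ) * legendre (m + 1)).eval x *
        (legendre (m+1)).eval x = (legendre (m+1)).eval x * (derivative (legendre m)).eval x +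
        (2 * m + 3) * (legendre (m+1)).eval x ^ 2 := by
      intro x; simp; ring
    simp only [h3] at h1
    rw [intervalIntegral.integral_add
      (Continuous.intervalIntegrable (by fun_prop) _ _)
      (Continuous.intervalIntegrable (by fun_prop) _ _), h2,
      intervalIntegral.integral_const_mul, (lob_leg_end _).1, (lob_leg_end _).1,
      (lob_leg_end _).2, (lob_leg_end _).2, ← pow_add, Odd.neg_one_pow (by use m+1; ring)] at h1
    push_cast
    rw [eq_div_iff (by positivity)]
    linarith

/-- Sharpness of the L² stability constant `2 + 4/(2p−3)`: there is a nonzero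
polynomial `u` of degree at most `p` whose Gauss–Lobatto interpolant `v = I_{p−1}u`
(the polynomial of degree at most `p − 1` agreeing with `u` at the roots of `χ_p`)
satisfies `∫_{−1}^{1} v² = (2 + 4/(2p−3)) ∫_{−1}^{1} u²`. -/
theorem gauss_lobatto_interp_l2_stability_sharp (p : ℕ) (hp : 2 ≤ p) :
    ∃ u v : Polynomial ℝ, u ≠ 0 ∧ u.natDegree ≤ p ∧ v.natDegree ≤ p - 1 ∧
      (∀ x : ℝ, (lobattoChi p).eval x = 0 → v.eval x = u.eval x) ∧
      ∫ x in (-1 : ℝ)..1, v.eval x ^ 2 =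
        (2 + 4 / (2 * (p : ℝ) - 3)) * ∫ x in (-1 : ℝ)..1, u.eval x ^ 2 := by
  obtain ⟨m, rfl⟩ : ∃ m, p = m + 2 := ⟨p - 2, by omega⟩
  refine ⟨C (2 * m + 5 : ℝ) * legendre (m + 2) + C (2 * m + 1 : ℝ) * legendre m,
    C (4 * m + 6 : ℝ) * legendre m, ?_, ?_, ?_, ?_, ?_⟩
  · intro h
    have h1 := congrArg (eval 1) h
    simp only [eval_add, eval_mul, eval_C, (lob_leg_end _).1, eval_zero] at h1
    have : (0:ℝ) ≤ m := by positivity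
    linarith
  · refine natDegree_add_le_of_degree_le ((natDegree_C_mul_le _ _).trans (lob_leg_natDegree _))
      ((natDegree_C_mul_le _ _).trans ((lob_leg_natDegree _).trans (by omega)))
  · exact (natDegree_C_mul_le _ _).trans ((lob_leg_natDegree _).trans (by omega))
  · intro x hx
    have h1 : (derivative^[m] ((X ^ 2 - 1 : ℝ[X]) ^ (m + 1))).eval x = 0 := by
      have h2 := congrArg (eval x) (lob_chi m)
      unfold lobattoChi legendre at hx
      rw [show m + 2 - 1 = m + 1 by omega, derivative_C_mul,
        ← Function.iterate_succ_apply' derivative, mul_assoc, eval_mul, eval_C] at hx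
      have h4 : (1 / (2 ^ (m + 1) * ((m + 1).factorial : ℝ))) ≠ 0 := by positivity
      have h5 := (mul_eq_zero.mp hx).resolve_left h4
      rw [h2, eval_mul, eval_C] at h5
      exact (mul_eq_zero.mp h5).resolve_left (by positivity)
    have h2 := congrArg (eval x) (lob_step m)
    rw [eval_add, eval_mul, h1, mul_zero, add_zero] at h2
    simp only [eval_add, eval_mul, eval_C, h2]
    ring
  · have ho := lob_leg_ortho (m + 2) (legendre m) (lob_leg_degree m (m+2) (by omega))
    have e1 : ∀ x : ℝ, (C (4 * m + 6 : ℝ) * legendre m).eval x ^ 2 =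
        (4 * m + 6) ^ 2 * (legendre m).eval x ^ 2 := by
      intro x; rw [eval_mul, eval_C]; ring
    have e2 : ∀ x : ℝ,
        (C (2 * m + 5 : ℝ) * legendre (m + 2) + C (2 * m + 1 : ℝ) * legendre m).eval x ^ 2 =
        (2 * m + 5) ^ 2 * (legendre (m + 2)).eval x ^ 2 + (2 * m + 1) ^ 2 * (legendre m).eval x ^ 2
        + 2 * (2 * m + 5) * (2 * m + 1) * ((legendre (m + 2)).eval x * (legendre m).eval x) := by
      intro x; rw [eval_add, eval_mul, eval_C, eval_mul, eval_C]; ring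
    simp only [e1, e2]
    have c1 := (legendre m).continuous
    have c2 := (legendre (m + 2)).continuous
    rw [intervalIntegral.integral_add
        (Continuous.intervalIntegrable (by fun_prop) _ _)
        (Continuous.intervalIntegrable (by fun_prop) _ _),
      intervalIntegral.integral_add
        (Continuous.intervalIntegrable (by fun_prop) _ _)
        (Continuous.intervalIntegrable (by fun_prop) _ _)]
    simp only [intervalIntegral.integral_const_mul]
    rw [ho, lob_norm, lob_norm]
    push_cast
    have p1 : (2 * (m : ℝ) + 1) ≠ 0 := by positivity
    have p2 : (2 * ((m : ℝ) + 2) + 1) ≠ 0 := by positivity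
    rw [show 2 * ((m : ℝ) + 2) - 3 = 2 * m + 1 by ring]
    field_simp
    ring
end

section
/- Let p ≥ 2 be an integer. For every real polynomial u of degree at most p, the Gauss–Lobatto interpolant satisfies ∫_{−1}^{1} ((I_{p−1}u)'(x))² dx ≤ ∫_{−1}^{1} (u'(x))² dx. -/
open Polynomial

lemma gl_C2 : (C (2 : ℝ)) = (2 : ℝ[X]) := rfl

lemma gl_splits (g : ℝ[X]) (hg : g.Splits) (k : ℕ) :
    ((⇑(derivative (R := ℝ)))^[k] g).Splits ∧
      ((⇑(derivative (R := ℝ)))^[k] g).natDegree = g.natDegree - k := by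
  induction k with
  | zero => simpa using hg
  | succ k ih =>
    obtain ⟨h1, h2⟩ := ih
    rw [Function.iterate_succ_apply']
    set q := (⇑(derivative (R := ℝ)))^[k] g
    have hd : (derivative q).natDegree = q.natDegree - 1 := natDegree_derivative q
    refine ⟨?_, by rw [hd, h2]; omega⟩
    rw [splits_iff_card_roots]
    have h3 := card_roots_le_derivative q
    rw [splits_iff_card_roots.1 h1] at h3
    have h4 := card_roots' (derivative q)
    omega

lemma gl_ode (n k : ℕ) :
    ((X : ℝ[X]) ^ 2 - 1) * (⇑(derivative (R := ℝ)))^[k + 2] ((X ^ 2 - 1) ^ n)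
      + 2 * ((k : ℝ[X]) + 1) * X * (⇑(derivative (R := ℝ)))^[k + 1] ((X ^ 2 - 1) ^ n)
      + (k : ℝ[X]) * ((k : ℝ[X]) + 1) * (⇑(derivative (R := ℝ)))^[k] ((X ^ 2 - 1) ^ n)
    = 2 * (n : ℝ[X]) * X * (⇑(derivative (R := ℝ)))^[k + 1] ((X ^ 2 - 1) ^ n)
      + 2 * (n : ℝ[X]) * ((k : ℝ[X]) + 1) * (⇑(derivative (R := ℝ)))^[k] ((X ^ 2 - 1) ^ n) := by
  induction k with
  | zero =>
    have h0 : ((X : ℝ[X]) ^ 2 - 1) * derivative ((X ^ 2 - 1) ^ n)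
        = 2 * (n : ℝ[X]) * X * (X ^ 2 - 1) ^ n := by
      rcases n with _ | n
      · simp
      · rw [derivative_pow_succ]
        simp only [derivative_sub, derivative_X_pow, derivative_one, map_add, map_natCast, map_one]
        push_cast
        norm_num [gl_C2]
        ring
    have h1 := congrArg derivative h0
    simp only [derivative_mul, derivative_sub, derivative_X_pow, derivative_one, derivative_natCast,
      derivative_ofNat, derivative_X] at h1
    simp only [Function.iterate_succ_apply', Function.iterate_zero, id] 
    norm_num [gl_C2] at h1 ⊢
    linear_combination h1
  | succ k ih =>
    have h1 := congrArg derivative ih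
    simp only [derivative_mul, derivative_add, derivative_sub, derivative_X_pow, derivative_one,
      derivative_natCast, derivative_ofNat, derivative_X, ← Function.iterate_succ_apply' (⇑(derivative (R := ℝ)))] at h1
    norm_num [gl_C2] at h1 ⊢
    linear_combination h1

lemma gl_chi (n : ℕ) :
    derivative (derivative (legendre n) * (X ^ 2 - 1)) =
      C ((n : ℝ) * (n + 1)) * legendre n := by
  have h := gl_ode n n
  simp only [legendre, derivative_mul, derivative_C, zero_mul, zero_add, derivative_sub,
    derivative_X_pow, derivative_one, ← Function.iterate_succ_apply' (⇑(derivative (R := ℝ)))]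
  simp only [Nat.succ_eq_add_one, C_mul, C_add, C_1, map_natCast] at h ⊢
  norm_num [gl_C2] at h ⊢
  linear_combination C ((n.factorial : ℝ)⁻¹) * C (((2 : ℝ) ^ n)⁻¹) * h

lemma gl_int (q : ℝ[X]) : IntervalIntegrable (fun x => q.eval x) MeasureTheory.volume (-1) 1 :=
  q.continuous.intervalIntegrable _ _

lemma gl_orth_aux (n k : ℕ) (hk : k ≤ n) (q : ℝ[X]) (hq : q.degree < k) :
    ∫ x in (-1 : ℝ)..1, q.eval x *
      ((⇑(derivative (R := ℝ)))^[k] ((X ^ 2 - 1) ^ n)).eval x = 0 := by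
  induction k generalizing q with
  | zero =>
    have : q = 0 := by
      simpa using hq
    simp [this]
  | succ k ih =>
    have hz : ∀ x : ℝ, x ^ 2 = 1 →
        ((⇑(derivative (R := ℝ)))^[k] ((X ^ 2 - 1) ^ n)).eval x = 0 := by
      intro x hx
      obtain ⟨r, hr⟩ := pow_sub_dvd_iterate_derivative_pow ((X : ℝ[X]) ^ 2 - 1) n k
      rw [hr]
      have : n - k ≠ 0 := by omega
      simp [hx, this]
    rw [Function.iterate_succ_apply']
    set g := (⇑(derivative (R := ℝ)))^[k] ((X ^ 2 - 1) ^ n)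
    rw [intervalIntegral.integral_mul_deriv_eq_deriv_mul
      (fun x _ => q.hasDerivAt x) (fun x _ => g.hasDerivAt x) (gl_int _) (gl_int _)]
    rw [ih (by omega) (derivative q) ?_, hz 1 (by norm_num), hz (-1) (by norm_num)]
    · simp
    · by_cases h0 : q = 0
      · simp [h0]
      · have h1 := degree_derivative_lt h0
        rw [degree_eq_natDegree h0] at h1 hq
        have : q.natDegree ≤ k := by
          have : q.natDegree < k + 1 := by exact_mod_cast hq
          omega
        exact h1.trans_le (by exact_mod_cast this)

lemma gl_orth (n : ℕ) (q : ℝ[X]) (hq : q.degree < n) :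
    ∫ x in (-1 : ℝ)..1, q.eval x * (legendre n).eval x = 0 := by
  have h := gl_orth_aux n n le_rfl q hq
  simp only [legendre, eval_mul, eval_C]
  simp_rw [mul_left_comm]
  rw [intervalIntegral.integral_const_mul, h, mul_zero]

lemma gl_sq : ((X : ℝ[X]) ^ 2 - 1) = (X - C 1) * (X - C (-1)) := by
  simp only [C_neg, C_1]; ring

lemma gl_sq_deg : ((X : ℝ[X]) ^ 2 - 1).natDegree = 2 := by
  have := natDegree_X_pow_sub_C (n := 2) (r := (1 : ℝ))
  simpa using this

lemma gl_sq_splits : ((X : ℝ[X]) ^ 2 - 1).Splits := by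
  rw [gl_sq]; exact (Splits.X_sub_C _).mul (Splits.X_sub_C _)

lemma gl_sq_mult (x : ℝ) : ((X : ℝ[X]) ^ 2 - 1).rootMultiplicity x ≤ 1 := by
  by_contra hc
  have hne : ((X : ℝ[X]) ^ 2 - 1) ≠ 0 := by
    intro h; have := gl_sq_deg; rw [h] at this; simp at this
  push Not at hc
  rw [one_lt_rootMultiplicity_iff_isRoot hne] at hc
  obtain ⟨h1, h2⟩ := hc
  simp [IsRoot] at h1 h2
  simp [h2] at h1

lemma gl_leg (n : ℕ) : (legendre n).Splits ∧ (legendre n).natDegree = n := by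
  have h := gl_splits (((X : ℝ[X]) ^ 2 - 1) ^ n) (gl_sq_splits.pow n) n
  refine ⟨h.1.C_mul _, ?_⟩
  rw [legendre, natDegree_C_mul (by positivity), h.2, natDegree_pow, gl_sq_deg]
  omega

theorem gauss_lobatto_interp_h1_stability (p : ℕ) (hp : 2 ≤ p)
    (u v : Polynomial ℝ) (hu : u.natDegree ≤ p) (hv : v.natDegree ≤ p - 1)
    (hinterp : ∀ x : ℝ, (lobattoChi p).eval x = 0 → v.eval x = u.eval x) :
    ∫ x in (-1 : ℝ)..1, (Polynomial.derivative v).eval x ^ 2 ≤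
      ∫ x in (-1 : ℝ)..1, (Polynomial.derivative u).eval x ^ 2 := by
  obtain ⟨n, rfl⟩ : ∃ n, p = n + 1 := ⟨p - 1, by omega⟩
  have hn : 1 ≤ n := by omega
  simp only [lobattoChi, Nat.add_sub_cancel] at hv hinterp
  have hode := gl_chi n
  obtain ⟨hPs, hPd⟩ := gl_leg n
  set P := legendre n
  have hdP := gl_splits P hPs 1
  simp only [Function.iterate_one] at hdP
  have hP0 : P ≠ 0 := by intro h; rw [h] at hPd; simp at hPd; omega
  have hP'0 : derivative P ≠ 0 := by rw [derivative_ne_zero]; omega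
  have hS0 : ((X : ℝ[X]) ^ 2 - 1) ≠ 0 := by
    intro h; have := gl_sq_deg; rw [h] at this; simp at this
  have hchi0 : derivative P * (X ^ 2 - 1) ≠ 0 := mul_ne_zero hP'0 hS0
  have hchid : (derivative P * (X ^ 2 - 1)).natDegree = n + 1 := by
    rw [natDegree_mul hP'0 hS0, gl_sq_deg, hdP.2]; omega
  have hchis : (derivative P * (X ^ 2 - 1)).Splits := hdP.1.mul gl_sq_splits
  have hc0 : ((n : ℝ) * (n + 1)) ≠ 0 := by positivity
  have hnodup : (derivative P * (X ^ 2 - 1)).roots.Nodup := by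
    rw [Multiset.nodup_iff_count_le_one]
    intro x
    rw [count_roots]
    by_contra hc
    push Not at hc
    have hc' := (one_lt_rootMultiplicity_iff_isRoot hchi0).1 hc
    have hPx : P.IsRoot x := by
      have := hc'.2
      rw [hode] at this
      simp only [IsRoot, eval_mul, eval_C] at this
      exact (mul_eq_zero.1 this).resolve_left hc0
    have e1 := derivative_rootMultiplicity_of_root hc'.1
    have e2 := derivative_rootMultiplicity_of_root hPx
    have e3 := rootMultiplicity_mul (x := x) hchi0
    have e4 := gl_sq_mult x
    have e5 : (C ((n : ℝ) * (n + 1)) * P).rootMultiplicity x = P.rootMultiplicity x := by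
      rw [rootMultiplicity_mul (mul_ne_zero (C_ne_zero.2 hc0) hP0), rootMultiplicity_C, zero_add]
    have e6 := (rootMultiplicity_pos hP0).2 hPx
    rw [hode, e5] at e1
    omega
  have hdvd : (derivative P * (X ^ 2 - 1)) ∣ u - v := by
    by_cases hw : u - v = 0
    · rw [hw]; exact dvd_zero _
    apply hchis.dvd_of_roots_le_roots hchi0
    rw [Multiset.le_iff_subset hnodup]
    intro x hx
    rw [mem_roots hw, IsRoot, eval_sub, hinterp x ((mem_roots hchi0).1 hx), sub_self]
  obtain ⟨q, hq⟩ := hdvd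
  have hq0 : q.natDegree = 0 := by
    by_cases h : q = 0
    · simp [h]
    have h1 := natDegree_mul hchi0 h
    rw [← hq, hchid] at h1
    have h2 := natDegree_sub_le u v
    have : max u.natDegree v.natDegree ≤ n + 1 := max_le hu (by omega)
    omega
  rw [eq_C_of_natDegree_eq_zero hq0] at hq
  set a := q.coeff 0
  have hder : derivative u = derivative v + C (a * ((n : ℝ) * (n + 1))) * P := by
    have h := congrArg derivative hq
    rw [derivative_mul, hode, derivative_C, mul_zero, add_zero, derivative_sub] at h
    rw [C_mul]
    linear_combination h
  set b := a * ((n : ℝ) * (n + 1))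
  have hvd : (derivative v).degree < n := by
    by_cases h0 : v = 0
    · simp [h0]
    · refine (degree_derivative_lt h0).trans_le ?_
      rw [degree_eq_natDegree h0]
      exact_mod_cast hv
  have ho := gl_orth n _ hvd
  have hexp : ∀ x : ℝ, (derivative u).eval x ^ 2 = (derivative v).eval x ^ 2 +
      ((2 * b) * ((derivative v).eval x * P.eval x) + (b * P.eval x) ^ 2) := by
    intro x
    rw [hder]; simp only [eval_add, eval_mul, eval_C]; ring
  simp_rw [hexp]
  have c1 := (derivative v).continuous
  have c2 := P.continuous
  rw [intervalIntegral.integral_add, intervalIntegral.integral_add,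
    intervalIntegral.integral_const_mul, ho]
  · have : 0 ≤ ∫ x in (-1 : ℝ)..1, (b * P.eval x) ^ 2 :=
      intervalIntegral.integral_nonneg (by norm_num) (fun x _ => sq_nonneg _)
    linarith
  all_goals exact Continuous.intervalIntegrable (by fun_prop) _ _
end
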